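/- Let the compact set A and lower semicontinuous kernel K satisfy assumptions (A1)-(A4). If {ω_N*}_{N≥2} is any sequence of polarization-optimal configurations, i.e. P(ω_N*) = 𝒫(A,N) = sup_{ω_N ∈ A^N} P(ω_N) for each N, and ν_N* is the probability measure assigning mass 1/N to each point of ω_N* (counting multiplicities), then ν_N* converges weakly to μ_eq as N → ∞. -/

import Mathlib

open MeasureTheory Filter Topology BoundedContinuousFunction NNReal ENNReal

noncomputable section

/-- The potential of a measure `μ` with respect to the kernel `K x y = f (nndist x y)`. -/
def potential {t : ℕ} (f : ℝ≥0 → ℝ≥0∞) (μ : Measure (EuclideanSpace ℝ (Fin t)))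
    (x : EuclideanSpace ℝ (Fin t)) : ℝ≥0∞ :=
  ∫⁻ y, f (nndist x y) ∂μ

/-- The energy `I[μ] = ∫∫ K(x,y) dμ(x) dμ(y)`. -/
def energy {t : ℕ} (f : ℝ≥0 → ℝ≥0∞) (μ : Measure (EuclideanSpace ℝ (Fin t))) : ℝ≥0∞ :=
  ∫⁻ x, potential f μ x ∂μ

/-- The normalized discrete potential `(1/N) ∑_{y ∈ ω} K(x,y)` of a configuration. -/
def discretePotential {t : ℕ} (f : ℝ≥0 → ℝ≥0∞) {N : ℕ}
    (ω : Fin N → EuclideanSpace ℝ (Fin t)) (x : EuclideanSpace ℝ (Fin t)) : ℝ≥0∞ :=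
  (N : ℝ≥0∞)⁻¹ * ∑ i, f (nndist x (ω i))

/-- The polarization `P(ω) = min_{x ∈ A} (1/N) ∑_{y ∈ ω} K(x,y)` of a configuration. -/
def polarization {t : ℕ} (f : ℝ≥0 → ℝ≥0∞) (A : Set (EuclideanSpace ℝ (Fin t))) {N : ℕ}
    (ω : Fin N → EuclideanSpace ℝ (Fin t)) : ℝ≥0∞ :=
  ⨅ x ∈ A, discretePotential f ω x

/-- The optimal `N`-point polarization `𝒫(A,N)`. -/
def maxPolarization {t : ℕ} (f : ℝ≥0 → ℝ≥0∞) (A : Set (EuclideanSpace ℝ (Fin t)))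
    (N : ℕ) : ℝ≥0∞ :=
  ⨆ (ω : Fin N → EuclideanSpace ℝ (Fin t)) (_ : ∀ i, ω i ∈ A), polarization f A ω

/-- The normalized counting measure of a configuration. -/
def countingMeasure {t : ℕ} {N : ℕ} (ω : Fin N → EuclideanSpace ℝ (Fin t)) :
    Measure (EuclideanSpace ℝ (Fin t)) :=
  (N : ℝ≥0∞)⁻¹ • ∑ i, Measure.dirac (ω i)

/-- Weak convergence of a sequence of measures: integrals of every bounded continuous
function converge. -/
def WeaklyTendsto {t : ℕ} (ν : ℕ → Measure (EuclideanSpace ℝ (Fin t)))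
    (μ : Measure (EuclideanSpace ℝ (Fin t))) : Prop :=
  ∀ g : EuclideanSpace ℝ (Fin t) →ᵇ ℝ,
    Tendsto (fun N => ∫ x, g x ∂(ν N)) atTop (𝓝 (∫ x, g x ∂μ))

theorem LowerSemicontinuous.exists_monotone_continuous_iSup_eq {Y : Type*} [PseudoMetricSpace Y]
    {f : Y → ℝ≥0∞} (hf : LowerSemicontinuous f) :
    ∃ g : ℕ → Y → ℝ≥0, (∀ n, Continuous (g n)) ∧ Monotone g ∧
      ∀ y, ⨆ n, (g n y : ℝ≥0∞) = f y := by
  let F : ℕ → Y → ℝ≥0 := fun n s => (min (f s) n).toNNReal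
  have hF : ∀ n s, (F n s : ℝ≥0∞) = min (f s) n := fun n s =>
    ENNReal.coe_toNNReal (ne_top_of_le_ne_top (ENNReal.natCast_ne_top n) (min_le_right _ _))
  let g : ℕ → Y → ℝ≥0 := fun n r => ⨅ s, (F n s + n * nndist r s)
  have hle : ∀ n r s, g n r ≤ F n s + n * nndist r s := fun n r s =>
    ciInf_le (OrderBot.bddBelow _) s
  refine ⟨g, fun n => ?_, fun m n hmn r => ?_, fun r => ?_⟩
  · refine NNReal.isEmbedding_coe.continuous_iff.2 (LipschitzWith.continuous (K := n) ?_)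
    refine LipschitzWith.of_le_add_mul _ fun r r' => ?_
    have : Nonempty Y := ⟨r⟩
    have : g n r ≤ g n r' + n * nndist r r' := by
      rw [← tsub_le_iff_right]
      refine le_ciInf fun s => tsub_le_iff_right.2 ((hle n r s).trans ?_)
      calc F n s + n * nndist r s ≤ F n s + n * (nndist r r' + nndist r' s) := by
            gcongr; exact nndist_triangle _ _ _
        _ = _ := by ring
    exact_mod_cast this
  · have : Nonempty Y := ⟨r⟩
    refine le_ciInf fun s => (hle m r s).trans ?_
    have : F m s ≤ F n s := by
      rw [← ENNReal.coe_le_coe, hF, hF]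
      gcongr
    gcongr
  · have : Nonempty Y := ⟨r⟩
    refine le_antisymm (iSup_le fun n => ?_) (le_of_forall_lt fun c hc => ?_)
    · calc (g n r : ℝ≥0∞) ≤ F n r := by simpa using hle n r r
        _ ≤ f r := (hF n r).trans_le (min_le_left _ _)
    · obtain ⟨d, hcd, hd⟩ := ENNReal.lt_iff_exists_nnreal_btwn.1 hc
      obtain ⟨δ, hδ, hball⟩ := Metric.eventually_nhds_iff.1 (hf r d hd)
      lift δ to ℝ≥0 using hδ.le
      have hδ0 : 0 < δ := by exact_mod_cast hδ
      obtain ⟨n, hn⟩ := exists_nat_ge (max d (d / δ))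
      refine hcd.trans_le (le_iSup_of_le n (ENNReal.coe_le_coe.2 (le_ciInf fun s => ?_)))
      by_cases hs : nndist s r < δ
      · have h1 : d ≤ F n s := by
          rw [← ENNReal.coe_le_coe, hF]
          refine le_min (hball (by exact_mod_cast hs)).le ?_
          exact_mod_cast (le_max_left _ _).trans hn
        exact h1.trans le_self_add
      · rw [not_lt, nndist_comm] at hs
        calc d = d / δ * δ := by field_simp
          _ ≤ n * nndist r s := by
            gcongr
            exact (le_max_right _ _).trans hn
          _ ≤ _ := le_add_self

section
variable {X : Type*} [MetricSpace X] [CompactSpace X] [MeasurableSpace X] [BorelSpace X]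

theorem continuous_lintegral_of_continuous_uncurry {k : X → X → ℝ≥0}
    (hk : Continuous (Function.uncurry k)) (μ : Measure X) [IsFiniteMeasure μ] :
    Continuous fun x => ∫⁻ y, (k x y : ℝ≥0∞) ∂μ := by
  obtain ⟨M, hM⟩ := (isCompact_range hk).bddAbove
  have hb : ∀ x y, k x y ≤ M := fun x y => hM ⟨(x, y), rfl⟩
  refine continuous_iff_continuousAt.2 fun x =>
    tendsto_lintegral_filter_of_dominated_convergence (fun _ => (M : ℝ≥0∞)) ?_ ?_ ?_ ?_
  · refine .of_forall fun x => Continuous.measurable ?_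
    fun_prop
  · exact .of_forall fun x => .of_forall fun y => ENNReal.coe_le_coe.2 (hb x y)
  · simp [ENNReal.mul_eq_top]
  · refine .of_forall fun y => Continuous.tendsto ?_ x
    fun_prop

theorem lintegral_le_of_tendsto_of_forall_lt_eventually_le_potential {ι : Type*} {L : Filter ι}
    [L.NeBot] {K : X → X → ℝ≥0∞} (hK : Measurable (Function.uncurry K)) {k : X → X → ℝ≥0}
    (hk : Continuous (Function.uncurry k)) (hkK : ∀ x y, (k x y : ℝ≥0∞) ≤ K x y)
    (μ : Measure X) [IsProbabilityMeasure μ] [μ.IsOpenPosMeasure] {W : ℝ≥0∞} (hW0 : 0 < W) (hW : W ≠ ⊤)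
    (hμ : ∀ y, ∫⁻ x, K x y ∂μ ≤ W)
    {P : ι → ProbabilityMeasure X} {ν : ProbabilityMeasure X} (hP : Tendsto P L (𝓝 ν))
    (hPW : ∀ c < W, ∀ᶠ i in L, ∀ x, c ≤ ∫⁻ y, K x y ∂(P i : Measure X)) (x₀ : X) :
    ∫⁻ y, (k x₀ y : ℝ≥0∞) ∂(ν : Measure X) ≤ W := by
  have hcoe : Measurable fun p : X × X => (k p.1 p.2 : ℝ≥0∞) :=
    (ENNReal.continuous_coe.comp hk).measurable
  by_contra! hlt
  obtain ⟨a, hWa, ha⟩ := exists_between hlt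
  set U : X → ℝ≥0∞ := fun x => ∫⁻ y, (k x y : ℝ≥0∞) ∂(ν : Measure X) with hU
  have hUc : Continuous U := continuous_lintegral_of_continuous_uncurry hk _
  set G : Set X := {x | a < U x} with hG
  have hGo : IsOpen G := isOpen_lt continuous_const hUc
  have hGm : MeasurableSet G := hGo.measurableSet
  have hG0 : μ G ≠ 0 := (hGo.measure_pos μ ⟨x₀, ha⟩).ne'
  have hsw : Continuous (Function.uncurry fun y x => k x y) := hk.comp continuous_swap
  have hhc := continuous_lintegral_of_continuous_uncurry hsw (μ.restrict G)
  have hfin : ∀ y, ∫⁻ x, (k x y : ℝ≥0∞) ∂(μ.restrict G) ≠ ⊤ := fun y =>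
    ne_top_of_le_ne_top hW <| (setLIntegral_le_lintegral _ _).trans <|
      (lintegral_mono fun x => hkK x y).trans (hμ y)
  let h : X →ᵇ ℝ≥0 := BoundedContinuousFunction.mkOfCompact
    ⟨fun y => (∫⁻ x, (k x y : ℝ≥0∞) ∂(μ.restrict G)).toNNReal,
      ENNReal.continuousOn_toNNReal.comp_continuous hhc hfin⟩
  have hh : ∀ Q : ProbabilityMeasure X, ∫⁻ y, (h y : ℝ≥0∞) ∂(Q : Measure X) =
      ∫⁻ x in G, ∫⁻ y, (k x y : ℝ≥0∞) ∂(Q : Measure X) ∂μ := by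
    intro Q
    rw [lintegral_lintegral_swap hcoe.aemeasurable]
    refine lintegral_congr fun y => ?_
    exact ENNReal.coe_toNNReal (hfin y)
  have hlim := ProbabilityMeasure.tendsto_iff_forall_lintegral_tendsto.1 hP h
  have key : ∀ c < W, ∫⁻ y, (h y : ℝ≥0∞) ∂(ν : Measure X) + c * μ Gᶜ ≤ W := by
    intro c hc
    refine le_of_tendsto (hlim.add_const _) ?_
    filter_upwards [hPW c hc] with i hi
    calc ∫⁻ y, (h y : ℝ≥0∞) ∂(P i : Measure X) + c * μ Gᶜ
        ≤ (∫⁻ x in G, ∫⁻ y, K x y ∂(P i : Measure X) ∂μ) +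
          ∫⁻ x in Gᶜ, ∫⁻ y, K x y ∂(P i : Measure X) ∂μ := by
          rw [hh]
          gcongr with x y
          · exact hkK x y
          · rw [← setLIntegral_const]
            exact lintegral_mono hi
      _ = ∫⁻ x, ∫⁻ y, K x y ∂(P i : Measure X) ∂μ := lintegral_add_compl _ hGm
      _ = ∫⁻ y, ∫⁻ x, K x y ∂μ ∂(P i : Measure X) := lintegral_lintegral_swap hK.aemeasurable
      _ ≤ ∫⁻ _, W ∂(P i : Measure X) := lintegral_mono hμ
      _ = W := by simp
  have hge : a * μ G ≤ ∫⁻ y, (h y : ℝ≥0∞) ∂(ν : Measure X) := by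
    rw [hh, ← setLIntegral_const]
    exact setLIntegral_mono hUc.measurable fun x hx => le_of_lt hx
  have hWG : a * μ G + W * μ Gᶜ ≤ W := by
    have hcl : IsClosed {c | a * μ G + c * μ Gᶜ ≤ W} := isClosed_le
      (continuous_const.add (ENNReal.continuous_mul_const (measure_ne_top μ Gᶜ))) continuous_const
    have hsub : Set.Iio W ⊆ {c | a * μ G + c * μ Gᶜ ≤ W} := fun c hc =>
      (add_le_add_left hge _).trans (key c hc)
    have := closure_minimal hsub hcl
    rw [closure_Iio' ⟨0, hW0⟩] at this
    exact this Set.self_mem_Iic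
  have hsplit : W * μ G + W * μ Gᶜ = W := by
    rw [← mul_add, measure_add_measure_compl hGm, measure_univ, mul_one]
  have : a * μ G ≤ W * μ G := by
    exact (ENNReal.add_le_add_iff_right
      (ENNReal.mul_ne_top hW (measure_ne_top _ _))).1 (hWG.trans_eq hsplit.symm)
  exact absurd this (not_le.2 ((ENNReal.mul_lt_mul_iff_left hG0 (measure_ne_top _ _)).2 hWa))

theorem eventually_exists_forall_norm_average_sub_integral_lt {E : Type*} [NormedAddCommGroup E]
    [NormedSpace ℝ E] [CompleteSpace E] {F : X → E} (hF : Continuous F) (μ : Measure X)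
    [IsProbabilityMeasure μ] {ε : ℝ} (hε : 0 < ε) :
    ∀ᶠ N : ℕ in atTop, ∃ ω : Fin N → X, ‖(N : ℝ)⁻¹ • ∑ i, F (ω i) - ∫ y, F y ∂μ‖ < ε := by
  borelize E
  let Q : Measure (ℕ → X) := Measure.infinitePi fun _ => μ
  have hFm : Measurable F := hF.measurable
  have hmp : ∀ i, MeasurePreserving (fun y : ℕ → X => y i) Q μ := fun i =>
    measurePreserving_eval_infinitePi (fun _ => μ) i
  have hint : Integrable F μ := hF.integrable_of_hasCompactSupport (.of_compactSpace F)
  have hlaw := ProbabilityTheory.strong_law_ae (μ := Q) (fun i y => F (y i))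
    ((hmp 0).integrable_comp_of_integrable hint)
    (fun i j hij => (ProbabilityTheory.iIndepFun_infinitePi (P := fun _ : ℕ => μ)
      (X := fun _ => F) fun _ => hFm).indepFun hij)
    (fun i => ⟨(hFm.comp (hmp i).measurable).aemeasurable,
      (hFm.comp (hmp 0).measurable).aemeasurable, by
        change Q.map (F ∘ fun y => y i) = Q.map (F ∘ fun y => y 0)
        rw [← Measure.map_map hFm (hmp i).measurable, ← Measure.map_map hFm (hmp 0).measurable,
          (hmp i).map_eq, (hmp 0).map_eq]⟩)
  obtain ⟨y, hy⟩ := hlaw.exists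
  have hI : ∫ z, F (z 0) ∂Q = ∫ x, F x ∂μ := by
    rw [← (hmp 0).map_eq, integral_map (hmp 0).measurable.aemeasurable]
    rw [(hmp 0).map_eq]
    exact hint.aestronglyMeasurable
  rw [hI] at hy
  filter_upwards [Metric.tendsto_nhds.1 hy ε hε] with N hN
  refine ⟨fun i => y i, ?_⟩
  rw [Fin.sum_univ_eq_sum_range fun i => F (y i), ← dist_eq_norm]
  exact hN

theorem eventually_exists_forall_le_average {k : ℕ → X → X → ℝ≥0}
    (hk : ∀ n, Continuous (Function.uncurry (k n))) (hmono : Monotone k) {K : X → X → ℝ≥0∞}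
    (hkK : ∀ x y, ⨆ n, (k n x y : ℝ≥0∞) = K x y) (μ : Measure X) [IsProbabilityMeasure μ]
    {W : ℝ≥0∞} (hμ : ∀ x, W ≤ ∫⁻ y, K x y ∂μ) {c : ℝ≥0∞} (hc : c < W) :
    ∀ᶠ N : ℕ in atTop, ∃ ω : Fin N → X, ∀ x, c ≤ (N : ℝ≥0∞)⁻¹ * ∑ i, K x (ω i) := by
  obtain ⟨b, hcb, hbW⟩ := exists_between hc
  lift b to ℝ≥0 using ne_top_of_lt hbW
  lift c to ℝ≥0 using ne_top_of_lt hcb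
  have hkm : ∀ n x, Measurable fun y => (k n x y : ℝ≥0∞) := fun n x =>
    (show Continuous fun y => (k n x y : ℝ≥0∞) by have := hk n; fun_prop).measurable
  have hcover : Set.univ ⊆ ⋃ n, {x : X | (b : ℝ≥0∞) < ∫⁻ y, (k n x y : ℝ≥0∞) ∂μ} := by
    intro x _
    have h1 := hbW.trans_le (hμ x)
    simp_rw [← hkK] at h1
    rw [lintegral_iSup (hkm · x) fun m n hmn y => ENNReal.coe_le_coe.2 (hmono hmn x y)] at h1
    simpa using lt_iSup_iff.1 h1
  obtain ⟨n, hn⟩ := isCompact_univ.elim_directed_cover _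
    (fun n => isOpen_lt continuous_const (continuous_lintegral_of_continuous_uncurry (hk n) μ))
    hcover (Monotone.directed_le fun m n hmn x hx => lt_of_lt_of_le hx
      (lintegral_mono fun y => ENNReal.coe_le_coe.2 (hmono hmn x y)))
  let Φ : C(X, C(X, ℝ)) := ContinuousMap.curry
    ⟨fun p : X × X => (k n p.2 p.1 : ℝ), by have := hk n; fun_prop⟩
  have hΦ : ∀ x y, Φ y x = k n x y := fun _ _ => rfl
  have hint : Integrable Φ μ :=
    Φ.continuous.integrable_of_hasCompactSupport (.of_compactSpace _)
  have hcb' : (c : ℝ) < b := by exact_mod_cast hcb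
  filter_upwards [eventually_exists_forall_norm_average_sub_integral_lt Φ.continuous μ
    (sub_pos.2 hcb'), eventually_gt_atTop 0] with N hN hN0
  obtain ⟨ω, hω⟩ := hN
  refine ⟨ω, fun x => ?_⟩
  have h1 := ((ContinuousMap.norm_coe_le_norm _ x).trans_lt hω)
  have h2 : (b : ℝ) ≤ ∫ y, (k n x y : ℝ) ∂μ := by
    have hx : Integrable (fun y => (k n x y : ℝ)) μ :=
      (show Continuous fun y => (k n x y : ℝ) by have := hk n; fun_prop)
        |>.integrable_of_hasCompactSupport (.of_compactSpace _)
    have : (b : ℝ≥0∞) ≤ ∫⁻ y, (k n x y : ℝ≥0∞) ∂μ := (hn (Set.mem_univ x)).le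
    rw [lintegral_coe_eq_integral _ hx, ← ENNReal.ofReal_coe_nnreal] at this
    exact (ENNReal.ofReal_le_ofReal_iff (integral_nonneg fun y => NNReal.coe_nonneg _)).1 this
  have h3 : (c : ℝ) ≤ (N : ℝ)⁻¹ * ∑ i, (k n x (ω i) : ℝ) := by
    rw [ContinuousMap.sub_apply, ContinuousMap.integral_apply hint, ContinuousMap.smul_apply,
      ContinuousMap.sum_apply, Real.norm_eq_abs, abs_lt, smul_eq_mul] at h1
    simp only [hΦ] at h1
    linarith [h1.1]
  have h4 : c ≤ (N : ℝ≥0)⁻¹ * ∑ i, k n x (ω i) := by exact_mod_cast h3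
  calc (c : ℝ≥0∞) ≤ (((N : ℝ≥0)⁻¹ * ∑ i, k n x (ω i) : ℝ≥0) : ℝ≥0∞) := ENNReal.coe_le_coe.2 h4
    _ = (N : ℝ≥0∞)⁻¹ * ∑ i, (k n x (ω i) : ℝ≥0∞) := by
      rw [ENNReal.coe_mul, ENNReal.coe_inv (by positivity)]
      push_cast
      rfl
    _ ≤ _ := by
      gcongr with i
      rw [← hkK]
      exact le_iSup (fun n => (k n x (ω i) : ℝ≥0∞)) n
end

theorem lintegral_countingMeasure {t N : ℕ} (ω : Fin N → EuclideanSpace ℝ (Fin t))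
    (h : EuclideanSpace ℝ (Fin t) → ℝ≥0∞) :
    ∫⁻ x, h x ∂countingMeasure ω = (N : ℝ≥0∞)⁻¹ * ∑ i, h (ω i) := by
  simp [countingMeasure, lintegral_finsetSum_measure]

theorem discretePotential_eq_potential_countingMeasure {t N : ℕ} (f : ℝ≥0 → ℝ≥0∞)
    (ω : Fin N → EuclideanSpace ℝ (Fin t)) (x : EuclideanSpace ℝ (Fin t)) :
    discretePotential f ω x = potential f (countingMeasure ω) x :=
  (lintegral_countingMeasure ω fun y => f (nndist x y)).symm

theorem isProbabilityMeasure_countingMeasure {t N : ℕ} (hN : N ≠ 0)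
    (ω : Fin N → EuclideanSpace ℝ (Fin t)) : IsProbabilityMeasure (countingMeasure ω) :=
  ⟨by simp [countingMeasure, ENNReal.inv_mul_cancel, hN]⟩

theorem countingMeasure_compl_eq_zero {t N : ℕ} {ω : Fin N → EuclideanSpace ℝ (Fin t)}
    {A : Set (EuclideanSpace ℝ (Fin t))} (hA : MeasurableSet A) (hω : ∀ i, ω i ∈ A) :
    countingMeasure ω Aᶜ = 0 := by
  simp [countingMeasure, hA.compl, hω]

theorem exists_probabilityMeasure_map_subtype_val_eq {E : Type*} [MeasurableSpace E] {A : Set E}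
    (hA : MeasurableSet A) (μ : Measure E) [IsProbabilityMeasure μ] (hμ : μ Aᶜ = 0) :
    ∃ P : ProbabilityMeasure A, (P : Measure A).map (↑) = μ := by
  have hmap : (μ.comap ((↑) : A → E)).map (↑) = μ := by
    rw [(MeasurableEmbedding.subtype_coe hA).map_comap, Subtype.range_coe]
    exact Measure.restrict_eq_self_of_ae_mem (mem_ae_iff.2 hμ)
  have : IsProbabilityMeasure (μ.comap ((↑) : A → E)) := by
    refine ⟨?_⟩
    rw [← measure_univ (μ := μ), ← hmap, Measure.map_apply measurable_subtype_coe .univ,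
      Set.preimage_univ, hmap]
  exact ⟨⟨_, this⟩, hmap⟩

theorem optimal_configurations_equidistribute
    {t : ℕ} (A : Set (EuclideanSpace ℝ (Fin t))) (hA : IsCompact A)
    (f : ℝ≥0 → ℝ≥0∞) (hf : LowerSemicontinuous f)
    (μeq : Measure (EuclideanSpace ℝ (Fin t))) (hμeq : IsProbabilityMeasure μeq)
    (hμeqA : μeq Aᶜ = 0)
    (hA1 : ∃ μ : Measure (EuclideanSpace ℝ (Fin t)),
      IsProbabilityMeasure μ ∧ μ Aᶜ = 0 ∧ energy f μ < ⊤)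
    (hA2min : ∀ ν : Measure (EuclideanSpace ℝ (Fin t)),
      IsProbabilityMeasure ν → ν Aᶜ = 0 → energy f μeq ≤ energy f ν)
    (hA2uniq : ∀ ν : Measure (EuclideanSpace ℝ (Fin t)),
      IsProbabilityMeasure ν → ν Aᶜ = 0 → energy f ν = energy f μeq → ν = μeq)
    (hA3 : ∀ x ∈ A, ∀ U : Set (EuclideanSpace ℝ (Fin t)), IsOpen U → x ∈ U → 0 < μeq U)
    (W : ℝ≥0∞) (hW : 0 < W) (hA4 : ∀ x ∈ A, potential f μeq x = W)
    (ω : (N : ℕ) → Fin N → EuclideanSpace ℝ (Fin t)) (hω : ∀ N, ∀ i, ω N i ∈ A)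
    (hopt : ∀ N, polarization f A (ω N) = maxPolarization f A N) :
    WeaklyTendsto (fun N => countingMeasure (ω N)) μeq := by
  have hAm : MeasurableSet A := hA.measurableSet
  have hAc : CompactSpace A := isCompact_iff_compactSpace.1 hA
  have hmv : Measurable ((↑) : A → EuclideanSpace ℝ (Fin t)) := measurable_subtype_coe
  have hfm : ∀ x : EuclideanSpace ℝ (Fin t), Measurable fun y => f (nndist x y) := fun x =>
    hf.measurable.comp (by fun_prop)
  have hpot : ∀ (P : Measure A) (x : EuclideanSpace ℝ (Fin t)),
      ∫⁻ y, f (nndist x y) ∂P = potential f (P.map (↑)) x := fun P x =>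
    (lintegral_map (hfm x) hmv).symm
  have hen : ∀ ν : Measure (EuclideanSpace ℝ (Fin t)), IsProbabilityMeasure ν → ν Aᶜ = 0 →
      (∀ x ∈ A, potential f ν x ≤ W) → energy f ν ≤ W := by
    intro ν _ hνA hνW
    calc energy f ν ≤ ∫⁻ _, W ∂ν :=
          lintegral_mono_ae (Filter.mem_of_superset (mem_ae_iff.2 hνA) hνW)
      _ = W := by simp
  have heq : energy f μeq = W := by
    calc energy f μeq = ∫⁻ _, W ∂μeq :=
          lintegral_congr_ae (Filter.mem_of_superset (mem_ae_iff.2 hμeqA) hA4)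
      _ = W := by simp
  have hWtop : W ≠ ⊤ := by
    obtain ⟨μ, hμ, hμA, hμfin⟩ := hA1
    exact ne_top_of_le_ne_top hμfin.ne (heq ▸ hA2min μ hμ hμA)
  obtain ⟨g, hgc, hgm, hg⟩ := hf.exists_monotone_continuous_iSup_eq
  let K : A → A → ℝ≥0∞ := fun x y => f (nndist x y)
  let k : ℕ → A → A → ℝ≥0 := fun n x y => g n (nndist x y)
  have hk : ∀ n, Continuous (Function.uncurry (k n)) := fun n =>
    (hgc n).comp (continuous_fst.nndist continuous_snd)
  have hkm : Monotone k := fun m n hmn x y => hgm hmn _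
  have hkK : ∀ x y, ⨆ n, (k n x y : ℝ≥0∞) = K x y := fun x y => hg _
  have hK : Measurable (Function.uncurry K) :=
    hf.measurable.comp (continuous_fst.nndist continuous_snd).measurable
  obtain ⟨M, hM⟩ := exists_probabilityMeasure_map_subtype_val_eq hAm μeq hμeqA
  have hMK : ∀ x, ∫⁻ y, K x y ∂(M : Measure A) = W := fun x => by
    rw [← hA4 x x.2, ← hM]
    exact hpot M x
  have hMK' : ∀ y, ∫⁻ x, K x y ∂(M : Measure A) ≤ W := fun y => by
    simp_rw [← hMK y, K, nndist_comm]
    rfl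
  have hMopen : (M : Measure A).IsOpenPosMeasure := by
    refine ⟨fun U hU ⟨x, hx⟩ => ?_⟩
    obtain ⟨V, hV, rfl⟩ := isOpen_induced_iff.1 hU
    rw [← Measure.map_apply hmv hV.measurableSet, hM]
    exact (hA3 x x.2 V hV hx).ne'
  choose P hP using fun N => have := isProbabilityMeasure_countingMeasure N.succ_ne_zero (ω (N + 1))
    exists_probabilityMeasure_map_subtype_val_eq hAm (countingMeasure (ω (N + 1)))
      (countingMeasure_compl_eq_zero hAm (hω (N + 1)))
  have hPW : ∀ c < W, ∀ᶠ N in atTop, ∀ x, c ≤ ∫⁻ y, K x y ∂(P N : Measure A) := by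
    intro c hc
    filter_upwards [(tendsto_add_atTop_nat 1).eventually (eventually_exists_forall_le_average hk hkm
      hkK (M : Measure A) (fun x => (hMK x).ge) hc)] with N ⟨y, hy⟩ x
    calc c ≤ polarization f A fun i => (y i : EuclideanSpace ℝ (Fin t)) :=
          le_iInf₂ fun z hz => hy ⟨z, hz⟩
      _ ≤ maxPolarization f A (N + 1) :=
          le_iSup₂_of_le (fun i => (y i : EuclideanSpace ℝ (Fin t))) (fun i => (y i).2) le_rfl
      _ = polarization f A (ω (N + 1)) := (hopt _).symm
      _ ≤ discretePotential f (ω (N + 1)) x := iInf₂_le _ x.2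
      _ = ∫⁻ y, K x y ∂(P N : Measure A) := by
          rw [discretePotential_eq_potential_countingMeasure, ← hP, ← hpot]
          rfl
  intro φ
  rw [← tendsto_add_atTop_iff_nat 1, tendsto_iff_ultrafilter]
  intro L hL
  obtain ⟨ν, -, hν⟩ := isCompact_univ.ultrafilter_le_nhds (L.map P) (by simp)
  have hνt : Tendsto P L (𝓝 ν) := hν
  have hνW : ∀ x, ∫⁻ y, K x y ∂(ν : Measure A) ≤ W := by
    intro x
    simp_rw [← hkK]
    rw [lintegral_iSup (fun n => ?_) fun m n hmn y => ENNReal.coe_le_coe.2 (hkm hmn x y)]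
    · exact iSup_le fun n => lintegral_le_of_tendsto_of_forall_lt_eventually_le_potential hK (hk n)
        (fun x y => hkK x y ▸ le_iSup (fun n => (k n x y : ℝ≥0∞)) n) M hW hWtop hMK' hνt
        (fun c hc => hL (hPW c hc)) x
    · exact (show Continuous fun y => (k n x y : ℝ≥0∞) by have := hk n; fun_prop).measurable
  have hνp : IsProbabilityMeasure ((ν : Measure A).map ((↑) : A → EuclideanSpace ℝ (Fin t))) :=
    Measure.isProbabilityMeasure_map hmv.aemeasurable
  have hνA : ((ν : Measure A).map ((↑) : A → EuclideanSpace ℝ (Fin t))) Aᶜ = 0 := by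
    rw [Measure.map_apply hmv hAm.compl]
    simp
  have hνeq : (ν : Measure A).map ((↑) : A → EuclideanSpace ℝ (Fin t)) = μeq := by
    refine hA2uniq _ hνp hνA (le_antisymm ?_ (hA2min _ hνp hνA))
    rw [heq]
    exact hen _ hνp hνA fun x hx => (hpot ν x).symm.trans_le (hνW ⟨x, hx⟩)
  have hint : ∀ Q : Measure A, ∫ x, φ x ∂Q.map (↑) = ∫ x : A, φ x ∂Q := fun Q =>
    integral_map hmv.aemeasurable φ.continuous.aestronglyMeasurable
  have := ProbabilityMeasure.tendsto_iff_forall_integral_tendsto.1 hνt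
    (φ.compContinuous ⟨(↑), continuous_subtype_val⟩)
  simp_rw [← hP, ← hνeq, hint]
  exact this
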